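/- For N even and p ≥ 2, the optimal constant C(N,p,2) := sup over unit vectors a ∈ ℝ^N and pairwise independent Rademacher vectors ε of (E|∑ᵢ aᵢεᵢ|^p)^{1/p} equals N^{1/2−1/p}. -/

import Mathlib

open MeasureTheory ENNReal

noncomputable section

/-- A family `ε` of ±1-valued (Rademacher) random variables which is `k`-wise independent:
every collection of at most `k` coordinates takes any prescribed pattern of signs with
probability `(1/2)^(number of coordinates)`. -/
def IsKWiseRademacher {Ω : Type*} [MeasurableSpace Ω] (μ : Measure Ω)
    {ι : Type*} [DecidableEq ι] (k : ℕ) (ε : ι → Ω → ℝ) : Prop :=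
  (∀ i, Measurable (ε i)) ∧
  ∀ s : Finset ι, s.card ≤ k → ∀ σ : ι → ℝ, (∀ i, σ i = 1 ∨ σ i = -1) →
    μ {ω | ∀ i ∈ s, ε i ω = σ i} = (2 : ℝ≥0∞)⁻¹ ^ s.card

/-- `CNpk N p k` : the best constant in the upper Khintchine inequality with exponent `p`
over all `k`-wise independent Rademacher vectors of length `N` and unit vectors `a`. -/
def CNpk (N : ℕ) (p : ℝ) (k : ℕ) : ℝ :=
  sSup {x : ℝ | ∃ (Ω : Type) (_ : MeasurableSpace Ω) (μ : Measure Ω),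
    IsProbabilityMeasure μ ∧ ∃ (ε : Fin N → Ω → ℝ) (a : Fin N → ℝ),
      IsKWiseRademacher μ k ε ∧ (∑ i, (a i) ^ 2 = 1) ∧
      x = (∫ ω, |∑ i, a i * ε i ω| ^ p ∂μ) ^ (1 / p)}

/-!
Upper bound: a pairwise independent Rademacher sum `X = ∑ aᵢ εᵢ` has `E X² = ∑ aᵢ²`, while
`|X| ≤ √N ‖a‖₂` by Cauchy-Schwarz, and `|X|ᵖ = |X|ᵖ⁻² X²` interpolates between the two.

Extremal vector: a uniform balanced sign vector has correlations `-1 / (N - 1)`, which are cancelled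
exactly by mixing in, with probability `1 / N`, the constant vectors `(1, …, 1)` and `(-1, …, -1)`.
For `aᵢ = 1 / √N` the sum then vanishes except with probability `1 / N`, when it equals `±√N`.
-/

section SignVariables

variable {Ω ι : Type*} [MeasurableSpace Ω] {μ : Measure Ω} {ε : ι → Ω → ℝ}

theorem prod_eq_one_or_eq_neg_one {x : ι → ℝ} {s : Finset ι}
    (hx : ∀ i ∈ s, x i = 1 ∨ x i = -1) : ∏ i ∈ s, x i = 1 ∨ ∏ i ∈ s, x i = -1 := by
  refine Finset.prod_induction x (fun y => y = 1 ∨ y = -1) ?_ (.inl rfl) hx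
  rintro a b (rfl | rfl) (rfl | rfl) <;> simp

theorem ite_eq_half_one_add_mul {x y : ℝ} (hx : x = 1 ∨ x = -1) (hy : y = 1 ∨ y = -1) :
    (if x = y then 1 else 0) = 2⁻¹ * (1 + y * x) := by
  rcases hx with rfl | rfl <;> rcases hy with rfl | rfl <;> norm_num

theorem memLp_of_ae_eq_one_or_eq_neg_one [IsFiniteMeasure μ] {X : Ω → ℝ} (hX : Measurable X)
    (hsign : ∀ᵐ ω ∂μ, X ω = 1 ∨ X ω = -1) (p : ℝ≥0∞) : MemLp X p μ := by
  refine .of_bound hX.aestronglyMeasurable 1 (hsign.mono ?_)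
  rintro ω (h | h) <;> simp [h]

theorem integrable_prod_of_ae_eq_one_or_eq_neg_one [IsFiniteMeasure μ]
    (hm : ∀ i, Measurable (ε i)) (hε : ∀ i, ∀ᵐ ω ∂μ, ε i ω = 1 ∨ ε i ω = -1) (s : Finset ι) :
    Integrable (fun ω => ∏ i ∈ s, ε i ω) μ := by
  refine (memLp_of_ae_eq_one_or_eq_neg_one (by fun_prop) ?_ 1).integrable le_rfl
  filter_upwards [(Finset.eventually_all s).2 fun i _ => hε i] with ω hω
  exact prod_eq_one_or_eq_neg_one hω

theorem measureReal_forall_mem_eq_sum_integral_prod [IsFiniteMeasure μ]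
    (hm : ∀ i, Measurable (ε i)) (hε : ∀ i, ∀ᵐ ω ∂μ, ε i ω = 1 ∨ ε i ω = -1)
    {σ : ι → ℝ} (hσ : ∀ i, σ i = 1 ∨ σ i = -1) (s : Finset ι) :
    μ.real {ω | ∀ i ∈ s, ε i ω = σ i} =
      2⁻¹ ^ s.card * ∑ t ∈ s.powerset, (∏ i ∈ t, σ i) * ∫ ω, ∏ i ∈ t, ε i ω ∂μ := by
  have hmeas : MeasurableSet {ω | ∀ i ∈ s, ε i ω = σ i} := by
    simp only [Set.ofPred_forall]
    exact Finset.measurableSet_biInter s fun i _ => hm i (measurableSet_singleton _)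
  have hexpand : {ω | ∀ i ∈ s, ε i ω = σ i}.indicator 1 =ᵐ[μ] fun ω =>
      2⁻¹ ^ s.card * ∑ t ∈ s.powerset, (∏ i ∈ t, σ i) * ∏ i ∈ t, ε i ω := by
    filter_upwards [(Finset.eventually_all s).2 fun i _ => hε i] with ω hω
    calc {ω | ∀ i ∈ s, ε i ω = σ i}.indicator 1 ω
        = ∏ i ∈ s, if ε i ω = σ i then (1 : ℝ) else 0 := by
          simp [Finset.prod_ite_zero, Set.indicator_apply]
      _ = ∏ i ∈ s, 2⁻¹ * (1 + σ i * ε i ω) :=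
          Finset.prod_congr rfl fun i hi => ite_eq_half_one_add_mul (hω i hi) (hσ i)
      _ = 2⁻¹ ^ s.card * ∑ t ∈ s.powerset, (∏ i ∈ t, σ i) * ∏ i ∈ t, ε i ω := by
          simp only [Finset.prod_mul_distrib, Finset.prod_const, Finset.prod_one_add]
  rw [← integral_indicator_one hmeas, integral_congr_ae hexpand, integral_const_mul,
    integral_finsetSum _ fun t _ =>
      (integrable_prod_of_ae_eq_one_or_eq_neg_one hm hε t).const_mul _]
  simp only [integral_const_mul]

theorem isKWiseRademacher_of_integral_prod_eq_zero [DecidableEq ι] [IsProbabilityMeasure μ] {k : ℕ}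
    (hm : ∀ i, Measurable (ε i)) (hε : ∀ i, ∀ᵐ ω ∂μ, ε i ω = 1 ∨ ε i ω = -1)
    (hprod : ∀ s : Finset ι, s.Nonempty → s.card ≤ k → ∫ ω, ∏ i ∈ s, ε i ω ∂μ = 0) :
    IsKWiseRademacher μ k ε := by
  refine ⟨hm, fun s hs σ hσ => ?_⟩
  have hsum : ∑ t ∈ s.powerset, (∏ i ∈ t, σ i) * ∫ ω, ∏ i ∈ t, ε i ω ∂μ = 1 := by
    rw [Finset.sum_eq_single_of_mem ∅ (Finset.empty_mem_powerset s)]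
    · simp
    · intro t ht htne
      rw [hprod t (Finset.nonempty_iff_ne_empty.2 htne)
        ((Finset.card_le_card (Finset.mem_powerset.1 ht)).trans hs), mul_zero]
  rw [← ENNReal.toReal_eq_toReal_iff' (measure_ne_top _ _) (by simp), ← measureReal_def,
    measureReal_forall_mem_eq_sum_integral_prod hm hε hσ, hsum]
  simp

end SignVariables

section UpperBound

variable {Ω ι : Type*} [MeasurableSpace Ω] {μ : Measure Ω}

theorem rpow_sub_two_mul_sq {x p : ℝ} (hx : 0 ≤ x) (hp : 2 ≤ p) :
    x ^ (p - 2) * x ^ 2 = x ^ p := by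
  rw [← Real.rpow_two, ← Real.rpow_add_of_nonneg hx (sub_nonneg.2 hp) zero_le_two, sub_add_cancel]

theorem integral_abs_rpow_le_rpow_mul_integral_sq {X : Ω → ℝ} {B p : ℝ} (hp : 2 ≤ p)
    (hX : Integrable (fun ω => X ω ^ 2) μ) (hB : ∀ᵐ ω ∂μ, |X ω| ≤ B) :
    ∫ ω, |X ω| ^ p ∂μ ≤ B ^ (p - 2) * ∫ ω, X ω ^ 2 ∂μ := by
  rw [← integral_const_mul]
  refine integral_mono_of_nonneg (.of_forall fun ω => by positivity) (hX.const_mul _) ?_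
  filter_upwards [hB] with ω hω
  calc |X ω| ^ p = |X ω| ^ (p - 2) * X ω ^ 2 := by
        rw [← sq_abs, rpow_sub_two_mul_sq (abs_nonneg _) hp]
    _ ≤ B ^ (p - 2) * X ω ^ 2 := by gcongr

theorem abs_sum_mul_le_sqrt_card_mul_sqrt [Fintype ι] (a : ι → ℝ) {x : ι → ℝ}
    (hx : ∀ i, x i = 1 ∨ x i = -1) :
    |∑ i, a i * x i| ≤ √(Fintype.card ι) * √(∑ i, a i ^ 2) := by
  have hsq : ∑ i, x i ^ 2 = Fintype.card ι := by
    simp [fun i => sq_eq_one_iff.2 (hx i)]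
  rw [← Real.sqrt_mul (Nat.cast_nonneg _), mul_comm, ← hsq]
  exact Real.abs_le_sqrt (Finset.sum_mul_sq_le_sq_mul_sq _ a x)

namespace IsKWiseRademacher

variable [DecidableEq ι] {k : ℕ} {ε : ι → Ω → ℝ}

theorem isProbabilityMeasure (h : IsKWiseRademacher μ k ε) : IsProbabilityMeasure μ :=
  ⟨by simpa using h.2 ∅ (by simp) 1 (by simp)⟩

theorem ae_eq_one_or_eq_neg_one (h : IsKWiseRademacher μ k ε) (hk : 1 ≤ k) (i : ι) :
    ∀ᵐ ω ∂μ, ε i ω = 1 ∨ ε i ω = -1 := by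
  have := h.isProbabilityMeasure
  have hhalf : ∀ c : ℝ, c = 1 ∨ c = -1 → μ {ω | ε i ω = c} = 2⁻¹ := fun c hc => by
    simpa using h.2 {i} (by simpa using hk) (fun _ => c) fun _ => hc
  have hmeas : ∀ c : ℝ, MeasurableSet {ω | ε i ω = c} :=
    fun c => h.1 i (measurableSet_singleton c)
  have hdisj : Disjoint {ω | ε i ω = 1} {ω | ε i ω = -1} :=
    Set.disjoint_left.2 fun ω (h₁ : ε i ω = 1) (h₂ : ε i ω = -1) => by norm_num [h₁] at h₂
  refine (prob_compl_eq_zero_iff ((hmeas 1).union (hmeas (-1)))).2 ?_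
  rw [measure_union hdisj (hmeas _), hhalf 1 (.inl rfl), hhalf (-1) (.inr rfl),
    ENNReal.inv_two_add_inv_two]

/- Strong induction: in the Walsh expansion of `μ {ω | ∀ i ∈ s, ε i ω = 1} = 2 ^ (-#s)` the empty
set already contributes `2 ^ (-#s)`, and the other proper subsets contribute nothing. -/
theorem integral_prod_eq_zero (h : IsKWiseRademacher μ k ε) {s : Finset ι} (hs : s.Nonempty)
    (hsk : s.card ≤ k) : ∫ ω, ∏ i ∈ s, ε i ω ∂μ = 0 := by
  have := h.isProbabilityMeasure
  induction s using Finset.strongInduction with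
  | H s ih =>
    have hwalsh := measureReal_forall_mem_eq_sum_integral_prod h.1
      (h.ae_eq_one_or_eq_neg_one (hs.card_pos.trans_le hsk)) (σ := 1) (by simp) s
    have hproper : ∀ t ∈ s.ssubsets, t ≠ ∅ → ∫ ω, ∏ i ∈ t, ε i ω ∂μ = 0 := fun t ht htne =>
      have hts := Finset.mem_ssubsets.1 ht
      ih t hts (Finset.nonempty_iff_ne_empty.2 htne) ((Finset.card_le_card hts.1).trans hsk)
    rw [measureReal_def, h.2 s hsk 1 (by simp), ← Finset.insert_erase (Finset.mem_powerset_self s),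
      Finset.sum_insert (Finset.notMem_erase _ _), ← Finset.ssubsets.eq_1,
      Finset.sum_eq_single_of_mem ∅ (Finset.empty_mem_ssubsets hs)
        fun t ht htne => by rw [hproper t ht htne, mul_zero]] at hwalsh
    simpa using hwalsh

theorem memLp (h : IsKWiseRademacher μ k ε) (hk : 1 ≤ k) (i : ι) (p : ℝ≥0∞) :
    MemLp (ε i) p μ :=
  have := h.isProbabilityMeasure
  memLp_of_ae_eq_one_or_eq_neg_one (h.1 i) (h.ae_eq_one_or_eq_neg_one hk i) p

theorem integral_mul (h : IsKWiseRademacher μ k ε) (hk : 2 ≤ k) (i j : ι) :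
    ∫ ω, ε i ω * ε j ω ∂μ = if i = j then 1 else 0 := by
  have := h.isProbabilityMeasure
  split_ifs with hij
  · subst hij
    have hsq : (fun ω => ε i ω * ε i ω) =ᵐ[μ] 1 :=
      (h.ae_eq_one_or_eq_neg_one (one_le_two.trans hk) i).mono fun ω => mul_self_eq_one_iff.2
    simp [integral_congr_ae hsq]
  · simpa [Finset.prod_pair hij] using
      h.integral_prod_eq_zero (Finset.insert_nonempty i {j}) ((Finset.card_pair hij).trans_le hk)

variable [Fintype ι]

theorem integral_sq_sum (h : IsKWiseRademacher μ k ε) (hk : 2 ≤ k) (a : ι → ℝ) :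
    ∫ ω, (∑ i, a i * ε i ω) ^ 2 ∂μ = ∑ i, a i ^ 2 := by
  have hint : ∀ i j, Integrable (fun ω => a i * a j * (ε i ω * ε j ω)) μ := fun i j =>
    ((h.memLp (one_le_two.trans hk) i 2).integrable_mul
      (h.memLp (one_le_two.trans hk) j 2)).const_mul _
  calc ∫ ω, (∑ i, a i * ε i ω) ^ 2 ∂μ
      = ∫ ω, ∑ i, ∑ j, a i * a j * (ε i ω * ε j ω) ∂μ := by
        simp only [sq, Finset.sum_mul_sum, mul_mul_mul_comm]
    _ = ∑ i, ∑ j, a i * a j * ∫ ω, ε i ω * ε j ω ∂μ := by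
        simp only [integral_finsetSum _ fun i _ => integrable_finsetSum _ fun j _ => hint i j,
          integral_finsetSum _ fun j _ => hint _ j, integral_const_mul]
    _ = ∑ i, a i ^ 2 := by simp [h.integral_mul hk, sq]

theorem integral_abs_sum_rpow_rpow_le (h : IsKWiseRademacher μ k ε) (hk : 2 ≤ k) (a : ι → ℝ)
    {p : ℝ} (hp : 2 ≤ p) :
    (∫ ω, |∑ i, a i * ε i ω| ^ p ∂μ) ^ (1 / p) ≤
      (Fintype.card ι : ℝ) ^ ((1 : ℝ) / 2 - 1 / p) * √(∑ i, a i ^ 2) := by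
  have hk₁ : 1 ≤ k := one_le_two.trans hk
  have hbound : ∀ᵐ ω ∂μ, |∑ i, a i * ε i ω| ≤ √(Fintype.card ι) * √(∑ i, a i ^ 2) := by
    filter_upwards [ae_all_iff.2 (h.ae_eq_one_or_eq_neg_one hk₁)] with ω hω
    exact abs_sum_mul_le_sqrt_card_mul_sqrt a hω
  have hint : Integrable (fun ω => (∑ i, a i * ε i ω) ^ 2) μ :=
    (memLp_finsetSum _ fun i _ => (h.memLp hk₁ i 2).const_mul (a i)).integrable_sq
  have hmoment := integral_abs_rpow_le_rpow_mul_integral_sq hp hint hbound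
  rw [h.integral_sq_sum hk] at hmoment
  have hr : 0 ≤ √(∑ i, a i ^ 2) := Real.sqrt_nonneg _
  have hr_sq : √(∑ i, a i ^ 2) ^ (p - 2) * ∑ i, a i ^ 2 = √(∑ i, a i ^ 2) ^ p := by
    rw [← rpow_sub_two_mul_sq hr hp, Real.sq_sqrt (Finset.sum_nonneg fun i _ => sq_nonneg (a i))]
  calc (∫ ω, |∑ i, a i * ε i ω| ^ p ∂μ) ^ (1 / p)
      ≤ ((√(Fintype.card ι) * √(∑ i, a i ^ 2)) ^ (p - 2) * ∑ i, a i ^ 2) ^ (1 / p) := by gcongr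
    _ = (√(Fintype.card ι) ^ (p - 2)) ^ (1 / p) * (√(∑ i, a i ^ 2) ^ p) ^ (1 / p) := by
        rw [Real.mul_rpow (Real.sqrt_nonneg _) hr, mul_assoc, hr_sq,
          Real.mul_rpow (by positivity) (by positivity)]
    _ = (Fintype.card ι : ℝ) ^ ((1 : ℝ) / 2 - 1 / p) * √(∑ i, a i ^ 2) := by
        rw [Real.sqrt_eq_rpow (Fintype.card ι), ← Real.rpow_mul (by positivity),
          ← Real.rpow_mul (by positivity), ← Real.rpow_mul hr, mul_one_div_cancel (by positivity),
          Real.rpow_one]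
        congr 2
        field_simp

end IsKWiseRademacher

end UpperBound

section SignVectors

open ProbabilityTheory Finset
open scoped BigOperators NNReal

instance instMeasurableSingletonClassUnits {M : Type*} [Monoid M] [MeasurableSpace M]
    [MeasurableSingletonClass M] : MeasurableSingletonClass Mˣ :=
  ⟨fun u => ⟨{↑u}, measurableSet_singleton _, by ext; simp [Units.ext_iff]⟩⟩

theorem integral_uniformOn {Ω : Type*} [MeasurableSpace Ω] [MeasurableSingletonClass Ω]
    (S : Finset Ω) (f : Ω → ℝ) : ∫ ω, f ω ∂uniformOn (S : Set Ω) = 𝔼 ω ∈ S, f ω := by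
  have hint : IntegrableOn f S Measure.count := by
    rw [← (S : Set Ω).biUnion_of_singleton]
    simp [integrableOn_finset_iUnion]
  rw [uniformOn, ProbabilityTheory.cond, integral_smul_measure, setIntegral_finset _ hint,
    expect_eq_sum_div_card]
  simp [div_eq_inv_mul]

variable {ι : Type*}

theorem intUnit_cast_eq_one_or_eq_neg_one (u : ℤˣ) : (u : ℝ) = 1 ∨ (u : ℝ) = -1 := by
  rcases Int.units_eq_one_or u with rfl | rfl <;> simp

theorem expect_sign_eq_zero_of_neg_mem {S : Finset (ι → ℤˣ)} (hS : ∀ ω, ω ∈ S ↔ -ω ∈ S) (i : ι) :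
    𝔼 ω ∈ S, (ω i : ℝ) = 0 := by
  have hneg : 𝔼 ω ∈ S, (ω i : ℝ) = 𝔼 ω ∈ S, -(ω i : ℝ) :=
    expect_equiv (Equiv.neg _) hS fun ω _ => by simp
  rw [expect_neg_distrib] at hneg
  linarith

variable [Fintype ι]

variable (ι) in
/-- The two constant sign vectors on `ι`. -/
def constantSigns : Finset (ι → ℤˣ) :=
  {1, -1}

theorem constantSigns_nonempty : (constantSigns ι).Nonempty :=
  insert_nonempty _ _

theorem expect_constantSigns_mul (i j : ι) : 𝔼 ω ∈ constantSigns ι, (ω i * ω j : ℝ) = 1 := by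
  rw [expect_congr rfl (g := fun _ => 1) (by simp [constantSigns]),
    expect_const constantSigns_nonempty]

variable [DecidableEq ι]

variable (ι) in
/-- The sign vectors on `ι` with equally many plus and minus signs. -/
def balancedSigns : Finset (ι → ℤˣ) :=
  {ω | ∑ i, (ω i : ℤ) = 0}

theorem sum_eq_zero_of_mem_balancedSigns {ω : ι → ℤˣ} (hω : ω ∈ balancedSigns ι) :
    ∑ i, (ω i : ℝ) = 0 := by
  have hsum : ∑ i, (ω i : ℤ) = 0 := by simpa [balancedSigns] using hω
  exact_mod_cast hsum

theorem balancedSigns_nonempty (hι : Even (Fintype.card ι)) : (balancedSigns ι).Nonempty := by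
  refine ⟨fun i => (-1) ^ (Fintype.equivFin ι i : ℕ), ?_⟩
  simp only [balancedSigns, mem_filter, mem_univ, true_and]
  push_cast
  rw [(Fintype.equivFin ι).sum_comp fun j => (-1 : ℤ) ^ (j : ℕ),
    Fin.sum_univ_eq_sum_range fun j => (-1 : ℤ) ^ j, neg_one_geom_sum, if_pos hι]

theorem expect_balancedSigns_mul_eq {i j l : ι} (hj : i ≠ j) (hl : i ≠ l) :
    𝔼 ω ∈ balancedSigns ι, (ω i * ω l : ℝ) = 𝔼 ω ∈ balancedSigns ι, (ω i * ω j : ℝ) := by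
  refine expect_equiv ((Equiv.swap j l).arrowCongr (Equiv.refl _)) (fun ω => ?_) fun ω _ => ?_
  · simp [balancedSigns, Equiv.sum_comp (Equiv.swap j l) fun m => (ω m : ℤ)]
  · simp [Equiv.swap_apply_of_ne_of_ne hj hl]

theorem card_sub_one_mul_expect_balancedSigns_mul (hι : Even (Fintype.card ι)) {i j : ι}
    (hij : i ≠ j) :
    ((Fintype.card ι : ℝ) - 1) * 𝔼 ω ∈ balancedSigns ι, (ω i * ω j : ℝ) = -1 := by
  have hdiag : 𝔼 ω ∈ balancedSigns ι, (ω i * ω i : ℝ) = 1 := by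
    simp only [fun ω : ι → ℤˣ => mul_self_eq_one_iff.2 (intUnit_cast_eq_one_or_eq_neg_one (ω i)),
      expect_const (balancedSigns_nonempty hι)]
  have hoff : ∑ l ∈ univ.erase i, 𝔼 ω ∈ balancedSigns ι, (ω i * ω l : ℝ) =
      ((Fintype.card ι : ℝ) - 1) * 𝔼 ω ∈ balancedSigns ι, (ω i * ω j : ℝ) := by
    rw [sum_congr rfl fun l hl => expect_balancedSigns_mul_eq hij (ne_of_mem_erase hl).symm,
      sum_const, nsmul_eq_mul, cast_card_erase_of_mem (mem_univ i), card_univ]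
  have hsum : ∑ l, 𝔼 ω ∈ balancedSigns ι, (ω i * ω l : ℝ) = 0 := by
    rw [← expect_sum_comm]
    exact expect_eq_zero fun ω hω => by
      rw [← mul_sum, sum_eq_zero_of_mem_balancedSigns hω, mul_zero]
  rw [← add_sum_erase _ _ (mem_univ i), hdiag, hoff] at hsum
  linarith

variable (ι) in
/-- The law of the extremal pairwise independent sign vector: with probability `1 / N`, where
`N = #ι`, a uniform constant sign vector, and otherwise a uniform balanced one. -/
def extremalSignMeasure : Measure (ι → ℤˣ) :=
  (Fintype.card ι : ℝ≥0)⁻¹ • uniformOn (constantSigns ι : Set (ι → ℤˣ)) +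
    (1 - (Fintype.card ι : ℝ≥0)⁻¹) • uniformOn (balancedSigns ι : Set (ι → ℤˣ))

theorem isProbabilityMeasure_extremalSignMeasure (hι : Even (Fintype.card ι)) :
    IsProbabilityMeasure (extremalSignMeasure ι) := by
  have := isProbabilityMeasure_uniformOn (constantSigns ι).finite_toSet
    (coe_nonempty.2 constantSigns_nonempty)
  have := isProbabilityMeasure_uniformOn (balancedSigns ι).finite_toSet
    (coe_nonempty.2 (balancedSigns_nonempty hι))
  refine ⟨?_⟩
  simp only [extremalSignMeasure, Measure.add_apply, Measure.smul_apply, measure_univ,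
    ← add_smul, add_tsub_cancel_of_le (Nat.cast_inv_le_one (Fintype.card ι)), one_smul]

theorem integral_extremalSignMeasure (f : (ι → ℤˣ) → ℝ) :
    ∫ ω, f ω ∂extremalSignMeasure ι =
      (Fintype.card ι : ℝ)⁻¹ * 𝔼 ω ∈ constantSigns ι, f ω +
        (1 - (Fintype.card ι : ℝ)⁻¹) * 𝔼 ω ∈ balancedSigns ι, f ω := by
  have hle : (Fintype.card ι : ℝ≥0)⁻¹ ≤ 1 := Nat.cast_inv_le_one _
  rw [extremalSignMeasure, integral_add_measure .of_finite .of_finite,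
    integral_smul_nnreal_measure, integral_smul_nnreal_measure, integral_uniformOn,
    integral_uniformOn, NNReal.smul_def, NNReal.smul_def, NNReal.coe_sub hle]
  simp

theorem integral_sign_extremalSignMeasure (i : ι) :
    ∫ ω, (ω i : ℝ) ∂extremalSignMeasure ι = 0 := by
  rw [integral_extremalSignMeasure,
    expect_sign_eq_zero_of_neg_mem (by simp [constantSigns, neg_eq_iff_eq_neg, or_comm]),
    expect_sign_eq_zero_of_neg_mem (by simp [balancedSigns])]
  simp

theorem integral_mul_extremalSignMeasure (hι : Even (Fintype.card ι)) {i j : ι} (hij : i ≠ j) :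
    ∫ ω, (ω i * ω j : ℝ) ∂extremalSignMeasure ι = 0 := by
  have : Nonempty ι := ⟨i⟩
  have hcard : (Fintype.card ι : ℝ) ≠ 0 := Nat.cast_ne_zero.2 Fintype.card_ne_zero
  rw [integral_extremalSignMeasure, expect_constantSigns_mul]
  field_simp
  linarith [card_sub_one_mul_expect_balancedSigns_mul hι hij]

theorem isKWiseRademacher_extremalSignMeasure (hι : Even (Fintype.card ι)) :
    IsKWiseRademacher (extremalSignMeasure ι) 2 fun i ω => (ω i : ℝ) := by
  have := isProbabilityMeasure_extremalSignMeasure hι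
  refine isKWiseRademacher_of_integral_prod_eq_zero (fun i => .of_discrete)
    (fun i => .of_forall fun ω => intUnit_cast_eq_one_or_eq_neg_one (ω i)) fun s hs hs₂ => ?_
  obtain hcard | hcard : s.card = 1 ∨ s.card = 2 := by have := hs.card_pos; omega
  · obtain ⟨i, rfl⟩ := card_eq_one.1 hcard
    simpa using integral_sign_extremalSignMeasure i
  · obtain ⟨i, j, hij, rfl⟩ := card_eq_two.1 hcard
    simpa [prod_pair hij] using integral_mul_extremalSignMeasure hι hij

theorem integral_abs_sum_rpow_extremalSignMeasure {p : ℝ} (hp : p ≠ 0) (c : ℝ) :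
    ∫ ω, |∑ i, c * (ω i : ℝ)| ^ p ∂extremalSignMeasure ι =
      (Fintype.card ι : ℝ)⁻¹ * (Fintype.card ι * |c|) ^ p := by
  have hconst : ∀ ω ∈ constantSigns ι,
      |∑ i, c * (ω i : ℝ)| ^ p = (Fintype.card ι * |c|) ^ p := by
    simp [constantSigns, abs_mul]
  have hbal : ∀ ω ∈ balancedSigns ι, |∑ i, c * (ω i : ℝ)| ^ p = 0 := fun ω hω => by
    rw [← mul_sum, sum_eq_zero_of_mem_balancedSigns hω, mul_zero, abs_zero, Real.zero_rpow hp]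
  rw [integral_extremalSignMeasure, expect_congr rfl hconst, expect_eq_zero hbal,
    expect_const constantSigns_nonempty, mul_zero, add_zero]

theorem integral_abs_sum_rpow_rpow_extremalSignMeasure [Nonempty ι] {p : ℝ} (hp : p ≠ 0) :
    (∫ ω, |∑ i, (√(Fintype.card ι))⁻¹ * (ω i : ℝ)| ^ p ∂extremalSignMeasure ι) ^ (1 / p) =
      (Fintype.card ι : ℝ) ^ ((1 : ℝ) / 2 - 1 / p) := by
  have hn : (0 : ℝ) < Fintype.card ι := Nat.cast_pos.2 Fintype.card_pos
  rw [integral_abs_sum_rpow_extremalSignMeasure hp, abs_of_nonneg (by positivity),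
    ← div_eq_mul_inv, Real.div_sqrt, Real.mul_rpow (by positivity) (by positivity),
    ← Real.rpow_mul (Real.sqrt_nonneg _), mul_one_div_cancel hp, Real.rpow_one,
    Real.inv_rpow hn.le, Real.rpow_sub hn, Real.sqrt_eq_rpow, inv_mul_eq_div]

end SignVectors

/-- for `N` even and `p ≥ 2`, the optimal pairwise-independent Khintchine
constant is `C(N,p,2) = N^{1/2 - 1/p}`. -/
theorem CNp2_eq {N : ℕ} (hN : 0 < N) (hNe : Even N) (p : ℝ) (hp : 2 ≤ p) :
    CNpk N p 2 = (N : ℝ) ^ ((1 : ℝ) / 2 - 1 / p) := by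
  have : NeZero N := ⟨hN.ne'⟩
  have hcard : Even (Fintype.card (Fin N)) := by rwa [Fintype.card_fin]
  refine IsGreatest.csSup_eq ⟨?attained, ?bounded⟩
  case attained =>
    refine ⟨Fin N → ℤˣ, inferInstance, extremalSignMeasure (Fin N),
      isProbabilityMeasure_extremalSignMeasure hcard, fun i ω => (ω i : ℝ), fun _ => (√N)⁻¹,
      isKWiseRademacher_extremalSignMeasure hcard, by simp [hN.ne'], ?_⟩
    simpa using (integral_abs_sum_rpow_rpow_extremalSignMeasure (ι := Fin N)
      (zero_lt_two.trans_le hp).ne').symm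
  case bounded =>
    rintro _ ⟨Ω, _, μ, -, ε, a, hε, ha, rfl⟩
    simpa [ha] using hε.integral_abs_sum_rpow_rpow_le le_rfl a hp
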